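/- arXiv:1103.3693 — 2 statements merged into one kernel-verified Lean document; each statement's English description precedes it below -/
import Mathlib

section
/- For a generalised multi-clause-set F the following conditions are equivalent: (i) F is matching lean; (ii) for every clause-occurrence C ∈ F one has δ*(F − {C}) < δ*(F); (iii) for every proper sub-multiset F' of F one has δ(F') < δ(F); (iv) F is a tight sub-multiset of itself and there is no other tight sub-multiset of F. -/
set_option linter.unusedSectionVars false
set_option linter.unusedVariables false

open scoped Classical

namespace GCLS

variable {V α : Type} [DecidableEq V] [DecidableEq α]

/-- A finite "functional" set of (variable, value) pairs, with values inside the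
given domains `D`; used both for clauses and for partial assignments. -/
def FinFn (D : V → Finset α) : Type :=
  { s : Finset (V × α) // (∀ p ∈ s, p.2 ∈ D p.1) ∧
      ∀ p ∈ s, ∀ q ∈ s, p.1 = q.1 → p = q }

variable {D : V → Finset α}

instance : DecidableEq (FinFn D) :=
  fun a b => decidable_of_iff (a.1 = b.1) Subtype.ext_iff.symm

namespace FinFn

/-- The set of variables occurring. -/
def vars (s : FinFn D) : Finset V := s.1.image Prod.fst

/-- Restriction to the pairs whose variable lies in `W`. -/
def restrictVars (s : FinFn D) (W : Finset V) : FinFn D :=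
  ⟨s.1.filter (fun p => p.1 ∈ W),
   fun p hp => s.2.1 p (Finset.mem_filter.mp hp).1,
   fun p hp q hq h =>
     s.2.2 p (Finset.mem_filter.mp hp).1 q (Finset.mem_filter.mp hq).1 h⟩

/-- Removal of a set of pairs. -/
def sdiff (s : FinFn D) (t : Finset (V × α)) : FinFn D :=
  ⟨s.1 \ t,
   fun p hp => s.2.1 p (Finset.mem_sdiff.mp hp).1,
   fun p hp q hq h =>
     s.2.2 p (Finset.mem_sdiff.mp hp).1 q (Finset.mem_sdiff.mp hq).1 h⟩

end FinFn

/-- Clauses: finite sets of literals `(v,ε)` (meaning "v ≠ ε"), at most one literal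
per variable, values inside the domains. -/
abbrev Clause (D : V → Finset α) := FinFn D

/-- Partial assignments: finitely many variables get values inside their domains. -/
abbrev PAssign (D : V → Finset α) := FinFn D

/-- `φ` satisfies the literal `(v,ε)` (i.e. "v ≠ ε"): `v` is assigned a value ≠ `ε`. -/
def SatLit (φ : PAssign D) (l : V × α) : Prop :=
  ∃ ε, (l.1, ε) ∈ φ.1 ∧ ε ≠ l.2

/-- `φ` satisfies a clause iff it satisfies some literal of it. -/
def SatClause (φ : PAssign D) (C : Clause D) : Prop :=
  ∃ l ∈ C.1, SatLit φ l

/-- The clause obtained from `C` by deleting all literals falsified by `φ`. -/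
def Clause.restrict (φ : PAssign D) (C : Clause D) : Clause D :=
  FinFn.sdiff C φ.1

/-- The operation `φ * F` on multi-clause-sets: remove all clauses satisfied by `φ`
and delete all falsified literals from the remaining clauses. -/
noncomputable def applyM (φ : PAssign D) (F : Multiset (Clause D)) : Multiset (Clause D) :=
  (F.filter (fun C => ¬ SatClause φ C)).map (Clause.restrict φ)

/-- The operation `φ * F` on clause-sets (with contraction of equal clauses). -/
noncomputable def applyF (φ : PAssign D) (F : Finset (Clause D)) : Finset (Clause D) :=
  (F.filter (fun C => ¬ SatClause φ C)).image (Clause.restrict φ)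

/-- Satisfiability: some partial assignment satisfies all clauses. -/
def Sat (F : Multiset (Clause D)) : Prop :=
  ∃ φ : PAssign D, applyM φ F = 0

/-- Minimal unsatisfiability of a clause-set. -/
def MinUnsat (F : Finset (Clause D)) : Prop :=
  ¬ Sat F.val ∧ ∀ F' ⊂ F, Sat F'.val

/-- The variables of a multi-clause-set. -/
def mvars (F : Multiset (Clause D)) : Finset V := F.toFinset.sup FinFn.vars

/-- The deficiency `δ(F) = c(F) - Σ_{v ∈ var(F)} (|D_v| - 1)`. -/
def delta (F : Multiset (Clause D)) : ℤ :=
  (Multiset.card F : ℤ) - ∑ v ∈ mvars F, ((D v).card - 1 : ℤ)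

lemma powerset_toFinset_nonempty (F : Multiset (Clause D)) :
    F.powerset.toFinset.Nonempty :=
  ⟨0, by simp⟩

/-- The maximal deficiency `δ*(F) = max {δ(F') : F' ≤ F}`. -/
noncomputable def deltaStar (F : Multiset (Clause D)) : ℤ :=
  F.powerset.toFinset.sup' (powerset_toFinset_nonempty F) delta

/-- A tight sub-multi-clause-set: `F' ≤ F` with `δ(F') = δ*(F)`. -/
noncomputable def Tight (F F' : Multiset (Clause D)) : Prop :=
  F' ≤ F ∧ delta F' = deltaStar F

/-- `F` is matching satisfiable: the clause-variable graph `B(F)` has a matching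
covering all clause-nodes.  Such a matching is encoded as a multiset `P` of pairs
(clause-occurrence, variable-node), where the variable-nodes `(v,k)`,
`k < |D v| - 1`, are the copies of the variable `v`; the matching covers each
clause-occurrence exactly once (`P.map Prod.fst = F`), uses pairwise distinct
variable-nodes, and respects adjacency in `B(F)`. -/
def MatchingSat (F : Multiset (Clause D)) : Prop :=
  ∃ P : Multiset (Clause D × (V × ℕ)),
    P.map Prod.fst = F ∧ (P.map Prod.snd).Nodup ∧
    ∀ p ∈ P, p.2.1 ∈ FinFn.vars p.1 ∧ p.2.2 < (D p.2.1).card - 1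

/-- The edge between clause `C` and the copies of variable `v` is retained in
`B_φ(F)`: the literal of `C` with variable `v` is satisfied by `φ`. -/
def EdgeSat (φ : PAssign D) (C : Clause D) (v : V) : Prop :=
  ∃ ε, (v, ε) ∈ C.1 ∧ SatLit φ (v, ε)

/-- `φ` is matching-satisfying for `F`: `B_φ(F)` has a matching covering all
clause-nodes. -/
def MatchingSatisfying (φ : PAssign D) (F : Multiset (Clause D)) : Prop :=
  ∃ P : Multiset (Clause D × (V × ℕ)),
    P.map Prod.fst = F ∧ (P.map Prod.snd).Nodup ∧
    ∀ p ∈ P, p.2.2 < (D p.2.1).card - 1 ∧ EdgeSat φ p.1 p.2.1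

/-- The maximum size of a matching in `B(F)`. -/
noncomputable def nu (F : Multiset (Clause D)) : ℕ :=
  sSup { k | ∃ P : Multiset (Clause D × (V × ℕ)),
    P.map Prod.fst ≤ F ∧ (P.map Prod.snd).Nodup ∧
    (∀ p ∈ P, p.2.1 ∈ FinFn.vars p.1 ∧ p.2.2 < (D p.2.1).card - 1) ∧
    Multiset.card P = k }

/-- The maximum size of a matching in `B_φ(F)`. -/
noncomputable def nuSub (φ : PAssign D) (F : Multiset (Clause D)) : ℕ :=
  sSup { k | ∃ P : Multiset (Clause D × (V × ℕ)),
    P.map Prod.fst ≤ F ∧ (P.map Prod.snd).Nodup ∧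
    (∀ p ∈ P, p.2.2 < (D p.2.1).card - 1 ∧ EdgeSat φ p.1 p.2.1) ∧
    Multiset.card P = k }

/-- `φ` is matching-maximum for `F`. -/
noncomputable def MatchingMaximum (φ : PAssign D) (F : Multiset (Clause D)) : Prop :=
  nuSub φ F = nu F

/-- `φ` is an autarky for `F`: every clause touched by `φ` is satisfied by `φ`. -/
def IsAutarky (φ : PAssign D) (F : Multiset (Clause D)) : Prop :=
  ∀ C ∈ F, (FinFn.vars C ∩ FinFn.vars φ).Nonempty → SatClause φ C

/-- `F` is lean: it has no non-trivial autarky. -/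
def IsLean (F : Multiset (Clause D)) : Prop :=
  ¬ ∃ φ : PAssign D, IsAutarky φ F ∧ (FinFn.vars φ ∩ mvars F).Nonempty

/-- The sub-multi-clause-set of clauses touched by the variables in `W`. -/
noncomputable def touchedBy (F : Multiset (Clause D)) (W : Finset V) : Multiset (Clause D) :=
  F.filter (fun C => (FinFn.vars C ∩ W).Nonempty)

/-- The restriction `F[W]`: keep the clauses touching `W` and delete from them all
literals whose variable is not in `W`. -/
noncomputable def restrictTo (F : Multiset (Clause D)) (W : Finset V) : Multiset (Clause D) :=
  (touchedBy F W).map (fun C => FinFn.restrictVars C W)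

/-- `φ` is a matching autarky for `F`: `φ` is matching-satisfying for the
sub-multi-clause-set of clauses touched by `φ`. -/
noncomputable def IsMatchingAutarky (φ : PAssign D) (F : Multiset (Clause D)) : Prop :=
  MatchingSatisfying φ (touchedBy F (FinFn.vars φ))

/-- `F` is matching lean: no non-trivial matching autarky. -/
noncomputable def MatchingLean (F : Multiset (Clause D)) : Prop :=
  ¬ ∃ φ : PAssign D, IsMatchingAutarky φ F ∧ (FinFn.vars φ ∩ mvars F).Nonempty

lemma surp_nonempty {F : Multiset (Clause D)} (h : (mvars F).Nonempty) :
    ((mvars F).powerset.erase ∅).Nonempty := by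
  obtain ⟨v, hv⟩ := h
  refine ⟨{v}, ?_⟩
  simp [Finset.mem_erase, Finset.singleton_subset_iff, hv]

/-- The surplus `surp(F) = min {δ(F[W]) : ∅ ≠ W ⊆ var(F)}` (and `0` if `var(F) = ∅`). -/
noncomputable def surp (F : Multiset (Clause D)) : ℤ :=
  if h : (mvars F).Nonempty then
    ((mvars F).powerset.erase ∅).inf' (surp_nonempty h)
      (fun W => delta (restrictTo F W))
  else 0

/-- The number of occurrences of the literal `l` in `F`. -/
noncomputable def litCount (F : Multiset (Clause D)) (l : V × α) : ℕ :=
  Multiset.card (F.filter (fun C => l ∈ C.1))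

/-- The number of occurrences `#_v(F)` of the variable `v` in `F`. -/
noncomputable def varCount (F : Multiset (Clause D)) (v : V) : ℕ :=
  ∑ ε ∈ D v, litCount F (v, ε)

/-- The partial assignment `⟨v → ε⟩`. -/
def single (v : V) (ε : α) (hε : ε ∈ D v) : PAssign D :=
  ⟨{(v, ε)}, by
    refine ⟨?_, ?_⟩
    · intro p hp
      rw [Finset.mem_singleton] at hp
      subst hp; exact hε
    · intro p hp q hq _
      rw [Finset.mem_singleton] at hp hq
      subst hp; subst hq; rfl⟩

/-- Composition `φ ∘ ψ` of partial assignments: domain is the union of the domains,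
`ψ` taking precedence. -/
def comp (φ ψ : PAssign D) : PAssign D :=
  ⟨ψ.1 ∪ φ.1.filter (fun p => p.1 ∉ FinFn.vars ψ), by
    constructor
    · intro p hp
      rcases Finset.mem_union.mp hp with h | h
      · exact ψ.2.1 p h
      · exact φ.2.1 p (Finset.mem_filter.mp h).1
    · intro p hp q hq hpq
      rcases Finset.mem_union.mp hp with h1 | h1 <;>
        rcases Finset.mem_union.mp hq with h2 | h2
      · exact ψ.2.2 p h1 q h2 hpq
      · exact absurd (hpq ▸ Finset.mem_image_of_mem Prod.fst h1)
          (Finset.mem_filter.mp h2).2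
      · exact absurd (hpq.symm ▸ Finset.mem_image_of_mem Prod.fst h2)
          (Finset.mem_filter.mp h1).2
      · exact φ.2.2 p (Finset.mem_filter.mp h1).1 q (Finset.mem_filter.mp h2).1 hpq⟩

/-- Two clauses clash (in some variable). -/
def Clash (C C' : Clause D) : Prop :=
  ∃ v ε ε', (v, ε) ∈ C.1 ∧ (v, ε') ∈ C'.1 ∧ ε ≠ ε'

/-- The number of variables in which two clauses clash. -/
noncomputable def clashCount (C C' : Clause D) : ℕ :=
  ((FinFn.vars C).filter
    (fun v => ∃ ε ε', (v, ε) ∈ C.1 ∧ (v, ε') ∈ C'.1 ∧ ε ≠ ε')).card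

/-- Hitting clause-sets: every two distinct clauses clash. -/
def Hitting (F : Finset (Clause D)) : Prop :=
  ∀ C ∈ F, ∀ C' ∈ F, C ≠ C' → Clash C C'

/-- Boolean clauses over the boolean variables `V × α` (one boolean variable per
generalised literal; the value `false` gives the positive boolean literal). -/
abbrev BClause (V α : Type) :=
  Clause (fun _ : V × α => (Finset.univ : Finset Bool))

/-- The direct translation of a single clause: each literal `(v,ε)` is replaced by
the positive boolean literal of the boolean variable `(v,ε)`. -/
def dirClause (C : Clause D) : BClause V α :=
  ⟨C.1.image (fun p => (p, false)), by
    constructor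
    · intro p _; exact Finset.mem_univ _
    · intro p hp q hq h
      simp only [Finset.mem_image] at hp hq
      obtain ⟨a, -, rfl⟩ := hp
      obtain ⟨b, -, rfl⟩ := hq
      exact congrArg (fun x => (x, false)) h⟩

/-- The ALO-clause for a variable `v`: the negative boolean literals of the boolean
variables `(v,ε)` for `ε ∈ D v`. -/
def aloClause (D : V → Finset α) (v : V) : BClause V α :=
  ⟨(D v).image (fun ε => ((v, ε), true)), by
    constructor
    · intro p _; exact Finset.mem_univ _
    · intro p hp q hq h
      simp only [Finset.mem_image] at hp hq
      obtain ⟨a, -, rfl⟩ := hp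
      obtain ⟨b, -, rfl⟩ := hq
      exact congrArg (fun x => (x, true)) h⟩

/-- The direct translation `Γ(F)`: the translated clauses together with the
ALO-clauses for all occurring variables. -/
noncomputable def dirTrans (F : Finset (Clause D)) : Finset (BClause V α) :=
  F.image dirClause ∪ (mvars F.val).image (aloClause D)

lemma mem_mvars {F : Multiset (Clause D)} {v : V} :
    v ∈ mvars F ↔ ∃ C ∈ F, v ∈ FinFn.vars C := by
  simp [mvars, Finset.mem_sup]

lemma mvars_mono {F G : Multiset (Clause D)} (h : F ≤ G) : mvars F ⊆ mvars G := by
  intro v hv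
  rw [mem_mvars] at hv ⊢
  obtain ⟨C, hC, hv⟩ := hv
  exact ⟨C, Multiset.mem_of_le h hC, hv⟩

lemma delta_le_deltaStar {F G : Multiset (Clause D)} (h : G ≤ F) : delta G ≤ deltaStar F := by
  unfold deltaStar
  exact Finset.le_sup' delta (by simpa using h)

lemma exists_delta_eq (F : Multiset (Clause D)) : ∃ G ≤ F, delta G = deltaStar F := by
  obtain ⟨G, hG, h⟩ := Finset.exists_mem_eq_sup' (powerset_toFinset_nonempty F) delta
  exact ⟨G, by simpa using hG, h.symm⟩

/-- The variable-nodes of the variables in `W`. -/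
def copies (D : V → Finset α) (W : Finset V) : Finset (V × ℕ) :=
  W.biUnion (fun v => (Finset.range ((D v).card - 1)).image (Prod.mk v))

lemma mem_copies {W : Finset V} {p : V × ℕ} :
    p ∈ copies D W ↔ p.1 ∈ W ∧ p.2 < (D p.1).card - 1 := by
  obtain ⟨v, k⟩ := p
  simp only [copies, Finset.mem_biUnion, Finset.mem_image, Finset.mem_range, Prod.mk.injEq]
  constructor
  · rintro ⟨w, hw, a, ha, rfl, rfl⟩; exact ⟨hw, ha⟩
  · rintro ⟨hw, ha⟩; exact ⟨v, hw, k, ha, rfl, rfl⟩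

lemma card_copies (hD : ∀ v, (D v).Nonempty) (W : Finset V) :
    ((copies D W).card : ℤ) = ∑ v ∈ W, ((D v).card - 1 : ℤ) := by
  unfold copies
  rw [Finset.card_biUnion]
  · push_cast
    refine Finset.sum_congr rfl fun v _ => ?_
    rw [Finset.card_image_of_injective _ (Prod.mk_right_injective v), Finset.card_range]
    have := (hD v).card_pos
    omega
  · intro v _ w _ hvw
    rw [Function.onFun, Finset.disjoint_left]
    intro p hp hq
    simp only [Finset.mem_image] at hp hq
    obtain ⟨a, _, rfl⟩ := hp
    obtain ⟨b, _, hb⟩ := hq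
    exact hvw (congrArg Prod.fst hb).symm

lemma mem_vars {s : FinFn D} {v : V} : v ∈ FinFn.vars s ↔ ∃ ε, (v, ε) ∈ s.1 := by
  simp [FinFn.vars]

lemma not_lean_of_tight (hD : ∀ v, (D v).Nonempty) {F F' : Multiset (Clause D)}
    (hlt : F' < F) (hmax : ∀ G ≤ F, delta G ≤ delta F') : ¬ MatchingLean F := by
  intro hlean
  apply hlean
  obtain ⟨R, rfl⟩ := Multiset.le_iff_exists_add.mp hlt.le
  have hR : R ≠ 0 := by rintro rfl; simp at hlt
  -- Hall
  have hall : ∃ f : R.ToType → V × ℕ, Function.Injective f ∧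
      ∀ i, f i ∈ copies D (FinFn.vars i.1 \ mvars F') := by
    rw [← Finset.all_card_le_biUnion_card_iff_exists_injective]
    intro s
    set G : Multiset (Clause D) := s.val.map (fun i => i.1) with hG
    have hGR : G ≤ R := by
      conv_rhs => rw [← Multiset.map_univ_coe R]
      exact Multiset.map_le_map (Finset.val_le_iff.mpr (Finset.subset_univ s))
    have h1 := hmax (F' + G) (by gcongr)
    have h2 : s.biUnion (fun i => copies D (FinFn.vars i.1 \ mvars F'))
        = copies D (mvars (F' + G) \ mvars F') := by
      ext p
      simp only [Finset.mem_biUnion, mem_copies, Finset.mem_sdiff, mem_mvars, Multiset.mem_add,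
        hG, Multiset.mem_map, Finset.mem_val]
      constructor
      · rintro ⟨i, hi, ⟨h1, h2⟩, h3⟩
        exact ⟨⟨⟨i.1, Or.inr ⟨i, hi, rfl⟩, h1⟩, h2⟩, h3⟩
      · rintro ⟨⟨⟨C, h | ⟨i, hi, rfl⟩, h1⟩, h2⟩, h3⟩
        · exact absurd ⟨C, h, h1⟩ h2
        · exact ⟨i, hi, ⟨h1, h2⟩, h3⟩
    rw [h2]
    have h3 := card_copies hD (mvars (F' + G) \ mvars F')
    have h4 := Finset.sum_sdiff (f := fun v => ((D v).card - 1 : ℤ))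
      (mvars_mono (Multiset.le_add_right F' G))
    have h5 : Multiset.card G = s.card := by simp [hG]
    simp only [delta, Multiset.card_add] at h1
    push_cast at h1
    omega
  obtain ⟨f, finj, hf⟩ := hall
  simp only [mem_copies, Finset.mem_sdiff] at hf
  have hg : ∀ i : R.ToType, ∃ ε, ((f i).1, ε) ∈ i.1.1 := fun i => mem_vars.mp (hf i).1.1
  choose g hg using hg
  have hε : ∀ v, ∃ ε ∈ D v, ∀ i, (f i).1 = v → ε ≠ g i := by
    intro v
    have hc : ((Finset.univ.filter (fun i => (f i).1 = v)).image g).card < (D v).card := by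
      have a1 : ((Finset.univ.filter (fun i => (f i).1 = v)).image g).card ≤
          (Finset.univ.filter (fun i => (f i).1 = v)).card := Finset.card_image_le
      have a2 : (Finset.univ.filter (fun i => (f i).1 = v)).card ≤
          (Finset.range ((D v).card - 1)).card := by
        apply Finset.card_le_card_of_injOn (fun i => (f i).2)
        · intro i hi
          simp only [Finset.coe_filter, Finset.mem_univ, true_and, Set.mem_setOf_eq] at hi
          have := (hf i).2
          rw [hi] at this
          simpa using this
        · intro i hi j hj hij
          simp only [Finset.coe_filter, Finset.mem_univ, true_and, Set.mem_setOf_eq] at hi hj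
          exact finj (Prod.ext (hi.trans hj.symm) hij)
      rw [Finset.card_range] at a2
      have := (hD v).card_pos
      omega
    obtain ⟨ε, h1, h2⟩ := Finset.exists_mem_notMem_of_card_lt_card hc
    refine ⟨ε, h1, fun i hi he => h2 ?_⟩
    rw [he]
    exact Finset.mem_image_of_mem g (by simp [hi])
  choose e he1 he2 using hε
  set W := mvars (F' + R) \ mvars F' with hW
  let φ : PAssign D := ⟨W.image (fun v => (v, e v)), by
    constructor
    · intro p hp
      obtain ⟨v, _, rfl⟩ := Finset.mem_image.mp hp
      exact he1 v
    · intro p hp q hq h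
      obtain ⟨v, _, rfl⟩ := Finset.mem_image.mp hp
      obtain ⟨w, _, rfl⟩ := Finset.mem_image.mp hq
      obtain rfl : v = w := h
      rfl⟩
  have hφ : FinFn.vars φ = W := by
    ext v
    simp [FinFn.vars, φ]
  have hfW : ∀ i, (f i).1 ∈ W := by
    intro i
    rw [hW, Finset.mem_sdiff, mem_mvars]
    exact ⟨⟨i.1, Multiset.mem_add.mpr (Or.inr (Multiset.coe_mem)), (hf i).1.1⟩, (hf i).1.2⟩
  have hT : touchedBy (F' + R) W = R := by
    unfold touchedBy
    rw [Multiset.filter_add, Multiset.filter_eq_nil.mpr, Multiset.filter_eq_self.mpr, zero_add]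
    · intro C hC
      rw [← Multiset.map_univ_coe R] at hC
      obtain ⟨i, _, rfl⟩ := Multiset.mem_map.mp hC
      exact ⟨(f i).1, Finset.mem_inter.mpr ⟨(hf i).1.1, hfW i⟩⟩
    · rintro C hC ⟨v, hv⟩
      rw [Finset.mem_inter, hW, Finset.mem_sdiff] at hv
      exact hv.2.2 (mem_mvars.mpr ⟨C, hC, hv.1⟩)
  refine ⟨φ, ?_, ?_⟩
  · unfold IsMatchingAutarky
    rw [hφ, hT]
    refine ⟨(Finset.univ : Finset R.ToType).val.map (fun i => (i.1, f i)), ?_, ?_, ?_⟩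
    · rw [Multiset.map_map]
      exact Multiset.map_univ_coe R
    · rw [Multiset.map_map]
      exact Multiset.Nodup.map finj Finset.univ.nodup
    · intro p hp
      obtain ⟨i, _, rfl⟩ := Multiset.mem_map.mp hp
      refine ⟨(hf i).2, g i, hg i, e (f i).1, ?_, he2 _ i rfl⟩
      exact Finset.mem_image_of_mem (fun v => (v, e v)) (hfW i)
  · rw [hφ]
    obtain ⟨C, hC⟩ := Multiset.exists_mem_of_ne_zero hR
    rw [← Multiset.map_univ_coe R] at hC
    obtain ⟨i, _, rfl⟩ := Multiset.mem_map.mp hC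
    exact ⟨(f i).1, Finset.mem_inter.mpr ⟨hfW i, (Finset.mem_sdiff.mp (hfW i)).1⟩⟩

lemma lean_of_delta (hD : ∀ v, (D v).Nonempty) {F : Multiset (Clause D)}
    (h : ∀ F' < F, delta F' < delta F) : MatchingLean F := by
  rintro ⟨φ, ⟨P, hP1, hP2, hP3⟩, v, hv⟩
  rw [Finset.mem_inter, mem_mvars] at hv
  obtain ⟨hvφ, C, hC, hvC⟩ := hv
  set N := F.filter (fun C => ¬ (FinFn.vars C ∩ FinFn.vars φ).Nonempty) with hN
  have hsplit : touchedBy F (FinFn.vars φ) + N = F := Multiset.filter_add_not _ F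
  have hNF : N ≤ F := Multiset.filter_le _ F
  have hlt : N < F := by
    refine lt_of_le_of_ne hNF fun heq => ?_
    rw [← heq, hN, Multiset.mem_filter] at hC
    exact hC.2 ⟨v, Finset.mem_inter.mpr ⟨hvC, hvφ⟩⟩
  have hd := h N hlt
  have hcard : Multiset.card (touchedBy F (FinFn.vars φ)) ≤ (copies D (mvars F \ mvars N)).card := by
    rw [← hP1, Multiset.card_map, ← Multiset.card_map Prod.snd P, ← Finset.card_mk (nodup := hP2)]
    apply Finset.card_le_card
    intro q hq
    obtain ⟨p, hp, rfl⟩ := Multiset.mem_map.mp (Finset.mem_mk.mp hq)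
    obtain ⟨h1, ε, h2, ε', h3, _⟩ := hP3 p hp
    rw [mem_copies, Finset.mem_sdiff]
    refine ⟨⟨mem_mvars.mpr ⟨p.1, ?_, mem_vars.mpr ⟨_, h2⟩⟩, fun hmem => ?_⟩, h1⟩
    · have : p.1 ∈ touchedBy F (FinFn.vars φ) := hP1 ▸ Multiset.mem_map_of_mem _ hp
      exact Multiset.mem_of_le (Multiset.filter_le _ F) this
    · obtain ⟨C', hC', hv'⟩ := mem_mvars.mp hmem
      rw [hN, Multiset.mem_filter] at hC'
      exact hC'.2 ⟨_, Finset.mem_inter.mpr ⟨hv', mem_vars.mpr ⟨_, h3⟩⟩⟩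
  have h3 := card_copies hD (mvars F \ mvars N)
  have h4 := Finset.sum_sdiff (f := fun v => ((D v).card - 1 : ℤ)) (mvars_mono hNF)
  have h5 := congrArg Multiset.card hsplit
  rw [Multiset.card_add] at h5
  simp only [delta] at hd
  omega

lemma lean_iff_delta (hD : ∀ v, (D v).Nonempty) (F : Multiset (Clause D)) :
    MatchingLean F ↔ ∀ F' < F, delta F' < delta F := by
  refine ⟨fun hl => ?_, lean_of_delta hD⟩
  by_contra! hc
  obtain ⟨F', hlt, hle⟩ := hc
  obtain ⟨G, hG, hGe⟩ := exists_delta_eq F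
  rcases hG.lt_or_eq with h | rfl
  · exact not_lean_of_tight hD h (fun H hH => hGe ▸ delta_le_deltaStar hH) hl
  · exact not_lean_of_tight hD hlt
      (fun H hH => (delta_le_deltaStar hH).trans (hGe ▸ hle)) hl

/-- characterisations of matching lean multi-clause-sets:
(i) matching lean ↔ (ii) removing any clause-occurrence strictly decreases `δ*`
↔ (iii) every proper sub-multiset has strictly smaller deficiency ↔ (iv) `F` is
the unique tight sub-multiset of itself. -/
theorem matchingLean_tfae
    (hD : ∀ v, (D v).Nonempty) (F : Multiset (Clause D)) :
    (MatchingLean F ↔ ∀ C ∈ F, deltaStar (F - {C}) < deltaStar F) ∧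
    (MatchingLean F ↔ ∀ F' < F, delta F' < delta F) ∧
    (MatchingLean F ↔ (Tight F F ∧ ∀ F', Tight F F' → F' = F)) := by
  have key := lean_iff_delta hD F
  refine ⟨key.trans ⟨fun h C hC => ?_, fun h => ?_⟩, key, key.trans ⟨fun h => ?_, ?_⟩⟩
  · obtain ⟨G, hG, hGe⟩ := exists_delta_eq (F - {C})
    rw [← hGe]
    have hlt : F - {C} < F := by
      rw [Multiset.sub_singleton]; exact Multiset.erase_lt.mpr hC
    exact (h G (hG.trans_lt hlt)).trans_le (delta_le_deltaStar le_rfl)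
  · have h' : ∀ F' < F, delta F' < deltaStar F := by
      intro F' hlt
      obtain ⟨C, hC⟩ := Multiset.lt_iff_cons_le.mp hlt
      have hCF : C ∈ F := Multiset.mem_of_le hC (Multiset.mem_cons_self C F')
      refine lt_of_le_of_lt (delta_le_deltaStar ?_) (h C hCF)
      rw [Multiset.sub_singleton]
      have := Multiset.erase_le_erase C hC
      rwa [Multiset.erase_cons_head] at this
    obtain ⟨G, hG, hGe⟩ := exists_delta_eq F
    rcases hG.lt_or_eq with hlt | rfl
    · exact absurd hGe (h' G hlt).ne
    · rw [hGe]; exact h'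
  · obtain ⟨G, hG, hGe⟩ := exists_delta_eq F
    have hF : delta F = deltaStar F := by
      rcases hG.lt_or_eq with hlt | rfl
      · have := h G hlt
        have := delta_le_deltaStar (le_refl F)
        omega
      · exact hGe
    refine ⟨⟨le_rfl, hF⟩, fun F' hF' => ?_⟩
    by_contra hne
    have := h F' (lt_of_le_of_ne hF'.1 hne)
    have := hF'.2
    omega
  · rintro ⟨⟨_, hF⟩, hu⟩ F' hlt
    rw [hF]
    exact lt_of_le_of_ne (delta_le_deltaStar hlt.le) fun he => hlt.ne (hu F' ⟨hlt.le, he⟩)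

end GCLS
end

section
/- If a generalised multi-clause-set F is non-empty and matching lean, then δ*(F) = δ(F) ≥ 1. -/
set_option linter.unusedSectionVars false
set_option linter.unusedVariables false

open scoped Classical

namespace GCLS

variable {V α : Type} [DecidableEq V] [DecidableEq α]

variable {D : V → Finset α}

lemma aux_mem_mvars (F : Multiset (Clause D)) (v : V) :
    v ∈ mvars F ↔ ∃ C ∈ F, v ∈ FinFn.vars C := by
  simp [mvars, Finset.mem_sup]

noncomputable def auxNodes (D : V → Finset α) (U : Finset V) : Finset (V × ℕ) :=
  U.biUnion (fun v => (Finset.range ((D v).card - 1)).image (fun k => (v, k)))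

lemma aux_mem_nodes (U : Finset V) (p : V × ℕ) :
    p ∈ auxNodes D U ↔ p.1 ∈ U ∧ p.2 < (D p.1).card - 1 := by
  obtain ⟨a, b⟩ := p
  simp only [auxNodes, Finset.mem_biUnion, Finset.mem_image, Finset.mem_range, Prod.mk.injEq]
  constructor
  · rintro ⟨v, hv, k, hk, rfl, rfl⟩
    exact ⟨hv, hk⟩
  · rintro ⟨h1, h2⟩
    exact ⟨a, h1, b, h2, rfl, rfl⟩

lemma aux_card_nodes (U : Finset V) :
    (auxNodes D U).card = ∑ v ∈ U, ((D v).card - 1) := by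
  unfold auxNodes
  rw [Finset.card_biUnion]
  · refine Finset.sum_congr rfl fun v _ => ?_
    rw [Finset.card_image_of_injective _ (fun a b h => (Prod.mk.injEq _ _ _ _ ▸ h).2),
      Finset.card_range]
  · intro x _ y _ hxy
    rw [Function.onFun, Finset.disjoint_left]
    intro p hp hq
    simp only [Finset.mem_image] at hp hq
    obtain ⟨_, _, rfl⟩ := hp
    obtain ⟨_, _, h⟩ := hq
    exact hxy (congrArg Prod.fst h).symm

lemma aux_mvars_add (F G : Multiset (Clause D)) :
    mvars (F + G) = mvars F ∪ mvars G := by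
  ext v
  simp only [aux_mem_mvars, Finset.mem_union, Multiset.mem_add]
  constructor
  · rintro ⟨C, h | h, hv⟩
    · exact Or.inl ⟨C, h, hv⟩
    · exact Or.inr ⟨C, h, hv⟩
  · rintro (⟨C, h, hv⟩ | ⟨C, h, hv⟩)
    · exact ⟨C, Or.inl h, hv⟩
    · exact ⟨C, Or.inr h, hv⟩

lemma aux_hall (hD : ∀ v, (D v).Nonempty) (F' H : Multiset (Clause D))
    (h : delta (F' + H) ≤ delta F') :
    Multiset.card H ≤ (auxNodes D (mvars H \ mvars F')).card := by
  have h1 : ∀ v, (((D v).card - 1 : ℕ) : ℤ) = ((D v).card : ℤ) - 1 := fun v => by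
    have := (hD v).card_pos
    omega
  rw [aux_card_nodes]
  unfold delta at h
  rw [aux_mvars_add, ← Finset.union_sdiff_self_eq_union,
    Finset.sum_union Finset.disjoint_sdiff, Multiset.card_add] at h
  zify
  simp only [h1]
  push_cast at h
  linarith

lemma aux_key (hD : ∀ v, (D v).Nonempty) (F' G : Multiset (Clause D))
    (hG : G ≠ 0) (hmax : ∀ H ≤ G, delta (F' + H) ≤ delta F') :
    ¬ MatchingLean (F' + G) := by
  have hall : ∀ s : Finset G.ToType,
      s.card ≤ (s.biUnion
        (fun i => auxNodes D (FinFn.vars i.1 \ mvars F'))).card := by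
    intro s
    have hle : s.val.map (fun i : G.ToType => i.1) ≤ G := by
      conv_rhs => rw [← Multiset.map_univ_coe G]
      exact Multiset.map_le_map (Finset.val_le_iff.mpr (Finset.subset_univ s))
    have := aux_hall hD F' _ (hmax _ hle)
    rw [Multiset.card_map] at this
    refine this.trans (Finset.card_le_card ?_)
    intro p hp
    rw [aux_mem_nodes, Finset.mem_sdiff, aux_mem_mvars] at hp
    obtain ⟨⟨⟨C, hC, hv⟩, hn⟩, hk⟩ := hp
    obtain ⟨i, hi, rfl⟩ := Multiset.mem_map.mp hC
    rw [Finset.mem_biUnion]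
    exact ⟨i, hi, (aux_mem_nodes _ _).mpr ⟨Finset.mem_sdiff.mpr ⟨hv, hn⟩, hk⟩⟩
  obtain ⟨f, hinj, hf⟩ := (Finset.all_card_le_biUnion_card_iff_exists_injective _).mp hall
  have hf1 : ∀ i, (f i).1 ∈ FinFn.vars i.1 := fun i =>
    (Finset.mem_sdiff.mp ((aux_mem_nodes _ _).mp (hf i)).1).1
  have hf2 : ∀ i, (f i).1 ∉ mvars F' := fun i =>
    (Finset.mem_sdiff.mp ((aux_mem_nodes _ _).mp (hf i)).1).2
  have hf3 : ∀ i, (f i).2 < (D (f i).1).card - 1 := fun i =>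
    ((aux_mem_nodes _ _).mp (hf i)).2
  have hg : ∀ i, ∃ ε, ((f i).1, ε) ∈ i.1.1 := by
    intro i
    obtain ⟨⟨a, b⟩, hp, h⟩ := Finset.mem_image.mp (hf1 i)
    exact ⟨b, h ▸ hp⟩
  choose g hg using hg
  have he : ∀ v, ∃ ε ∈ D v, ∀ i, (f i).1 = v → g i ≠ ε := by
    intro v
    have hc : ((Finset.univ.filter (fun i => (f i).1 = v)).image g).card < (D v).card := by
      refine Finset.card_image_le.trans_lt ?_
      have : (Finset.univ.filter (fun i => (f i).1 = v)).card
          ≤ (Finset.range ((D v).card - 1)).card := by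
        refine Finset.card_le_card_of_injOn (fun i => (f i).2) ?_ ?_
        · intro i hi
          have hi' : (f i).1 = v := by simpa using hi
          have := hf3 i
          rw [hi'] at this
          simpa using this
        · intro i hi j hj hij
          have hi' : (f i).1 = v := by simpa using hi
          have hj' : (f j).1 = v := by simpa using hj
          exact hinj (Prod.ext (hi'.trans hj'.symm) hij)
      rw [Finset.card_range] at this
      have := (hD v).card_pos
      omega
    obtain ⟨ε, h1, h2⟩ := Finset.exists_mem_notMem_of_card_lt_card hc
    refine ⟨ε, h1, fun i hi h => h2 (Finset.mem_image.mpr ⟨i, ?_, h⟩)⟩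
    simpa using hi
  choose e he1 he2 using he
  let W : Finset V := mvars (F' + G) \ mvars F'
  let φ : PAssign D := ⟨W.image (fun v => (v, e v)), by
    constructor
    · intro p hp
      obtain ⟨v, _, rfl⟩ := Finset.mem_image.mp hp
      exact he1 v
    · intro p hp q hq h
      obtain ⟨v, _, rfl⟩ := Finset.mem_image.mp hp
      obtain ⟨w, _, rfl⟩ := Finset.mem_image.mp hq
      have h' : v = w := h
      rw [h']⟩
  have hvφ : FinFn.vars φ = W := by
    ext v
    simp [FinFn.vars, φ]
  have hfW : ∀ i, (f i).1 ∈ W := fun i =>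
    Finset.mem_sdiff.mpr ⟨(aux_mem_mvars _ _).mpr
      ⟨i.1, Multiset.mem_add.mpr (Or.inr (Multiset.coe_mem)), hf1 i⟩, hf2 i⟩
  have hP : (Finset.univ : Finset G.ToType).val.map (fun i => i.1) = G :=
    Multiset.map_univ_coe G
  have ht : touchedBy (F' + G) W = G := by
    unfold touchedBy
    rw [Multiset.filter_add, Multiset.filter_eq_nil.mpr, Multiset.filter_eq_self.mpr, zero_add]
    · intro C hC
      rw [← hP] at hC
      obtain ⟨i, _, rfl⟩ := Multiset.mem_map.mp hC
      exact ⟨(f i).1, Finset.mem_inter.mpr ⟨hf1 i, hfW i⟩⟩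
    · rintro C hC ⟨v, hv⟩
      rw [Finset.mem_inter, Finset.mem_sdiff] at hv
      exact hv.2.2 ((aux_mem_mvars _ _).mpr ⟨C, hC, hv.1⟩)
  intro hlean
  refine hlean ⟨φ, ?_, ?_⟩
  · unfold IsMatchingAutarky
    rw [hvφ, ht]
    refine ⟨(Finset.univ : Finset G.ToType).val.map (fun i => (i.1, f i)), ?_, ?_, ?_⟩
    · rw [Multiset.map_map]
      exact hP
    · rw [Multiset.map_map]
      exact Multiset.Nodup.map hinj Finset.univ.nodup
    · intro p hp
      obtain ⟨i, _, rfl⟩ := Multiset.mem_map.mp hp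
      exact ⟨hf3 i, g i, hg i, e (f i).1, Finset.mem_image_of_mem _ (hfW i),
        (he2 _ i rfl).symm⟩
  · obtain ⟨C, hC⟩ := Multiset.exists_mem_of_ne_zero hG
    rw [← hP] at hC
    obtain ⟨i, _, _⟩ := Multiset.mem_map.mp hC
    rw [hvφ]
    exact ⟨(f i).1, Finset.mem_inter.mpr ⟨hfW i, (Finset.mem_sdiff.mp (hfW i)).1⟩⟩

/-- a non-empty matching lean multi-clause-set satisfies
`δ*(F) = δ(F) ≥ 1`. -/
theorem matchingLean_deficiency_ge_one
    (hD : ∀ v, (D v).Nonempty) (F : Multiset (Clause D))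
    (hne : F ≠ 0) (hlean : MatchingLean F) :
    deltaStar F = delta F ∧ 1 ≤ delta F := by
  have hle : ∀ H ≤ F, delta H ≤ deltaStar F := fun H hH =>
    Finset.le_sup' delta (by simpa using hH)
  have huniq : ∀ H ≤ F, delta H = deltaStar F → H = F := by
    intro H hH h
    by_contra hne'
    have hF : H + (F - H) = F := add_tsub_cancel_of_le hH
    refine aux_key hD H (F - H) ?_ ?_ (hF.symm ▸ hlean)
    · intro h0
      rw [h0, add_zero] at hF
      exact hne' hF
    · intro K hK
      rw [h]
      apply hle
      rw [← hF]
      gcongr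
  obtain ⟨H, hH, hHe⟩ := Finset.exists_mem_eq_sup' (powerset_toFinset_nonempty F) delta
  have hH' : H ≤ F := by simpa using hH
  have hFe : deltaStar F = delta F := by
    have := huniq H hH' hHe.symm
    rw [this] at hHe
    exact hHe
  refine ⟨hFe, ?_⟩
  have h0 : delta (0 : Multiset (Clause D)) = 0 := by simp [delta, mvars]
  have h1 := hle 0 (Multiset.zero_le F)
  have h2 : (0 : ℤ) ≠ deltaStar F := fun h => hne (huniq 0 (Multiset.zero_le F) (h0.trans h)).symm
  rw [h0] at h1
  rw [← hFe]
  omega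

end GCLS
end
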